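/- Let K be an algebraically closed field, let n >= 1, fix i, j in [n] with i >= j, and fix an integer r >= 0. For any A in Mat^ss_n(K), one has rank(A_{[i][j]}) <= r if and only if pf(A_{RR}) = 0 for every nonempty even-size subset R of [i] with |R intersect [j]| > r. -/

import Mathlib

namespace Paper

/-!
We model a permutation of the positive integers `{1, 2, 3, ...}` as an `Equiv.Perm ℕ`
that fixes `0`; all notions below refer only to positive inputs.
-/

/-- The rank `r_w(i,j) = #{a ∈ [i] : w(a) ∈ [j]}` of the `i × j` partial
permutation matrix of `w`, where `[k] = {1, ..., k}`. -/
def rnk (w : Equiv.Perm ℕ) (i j : ℕ) : ℕ :=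
  ((Finset.Icc 1 i).filter fun a => w a ∈ Finset.Icc 1 j).card

/-- Right descent set `Des_R(w) = {i ≥ 1 : w(i) > w(i+1)}`. -/
def DesR (w : Equiv.Perm ℕ) : Set ℕ := {i | 1 ≤ i ∧ w (i + 1) < w i}

/-- Left descent set `Des_L(w) = Des_R(w⁻¹)`. -/
def DesL (w : Equiv.Perm ℕ) : Set ℕ := DesR w⁻¹

/-- `S_∞`: permutations of the positive integers fixing all but finitely many points. -/
def SInfty : Set (Equiv.Perm ℕ) :=
  {w | w 0 = 0 ∧ Set.Finite {i : ℕ | w i ≠ i}}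

/-- `S^{m,n}_∞ = {w ∈ S_∞ : Des_R(w) ⊆ [m], Des_L(w) ⊆ [n]}`. -/
def SmnInfty (m n : ℕ) : Set (Equiv.Perm ℕ) :=
  {w | w ∈ SInfty ∧ DesR w ⊆ Set.Icc 1 m ∧ DesL w ⊆ Set.Icc 1 n}

/-- The Rothe diagram `D(w) = {(i,j) : 0 < j < w(i), 0 < i < w⁻¹(j)}`. -/
def Rothe (w : Equiv.Perm ℕ) : Set (ℕ × ℕ) :=
  {p | 0 < p.2 ∧ p.2 < w p.1 ∧ 0 < p.1 ∧ p.1 < w⁻¹ p.2}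

/-- The function `1_FPF`, sending `i ↦ i - (-1)^i` on positive integers (it fixes `0`). -/
def oneFPF : ℕ → ℕ := fun i => if i % 2 = 1 then i + 1 else i - 1

/-- `I^FPF_∞`: fixed-point-free involutions of the positive integers agreeing with
`1_FPF` at all sufficiently large inputs. -/
def IFPFInfty : Set (Equiv.Perm ℕ) :=
  {z | z 0 = 0 ∧ (∀ i, 1 ≤ i → z i ≠ i) ∧ z * z = 1 ∧ ∃ N, ∀ i, N ≤ i → z i = oneFPF i}

/-- The skew-symmetric Rothe diagram `D^ss(z) = {(i,j) : 0 < j < z(i), j < i < z(j)}`. -/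
def Dss (z : Equiv.Perm ℕ) : Set (ℕ × ℕ) :=
  {p | 0 < p.2 ∧ p.2 < z p.1 ∧ p.2 < p.1 ∧ p.1 < z p.2}

/-- `FPF_n(I_n) = {z ∈ I^FPF_∞ : D^ss(z) ⊆ [n] × [n]}`. -/
def FPFIn (n : ℕ) : Set (Equiv.Perm ℕ) :=
  {z | z ∈ IFPFInfty ∧ Dss z ⊆ Set.Icc 1 n ×ˢ Set.Icc 1 n}

/-- `ℓ_fpf(z) = |D^ss(z)|`. -/
noncomputable def ellFpf (z : Equiv.Perm ℕ) : ℕ := (Dss z).ncard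

/-- Bruhat order on `I^FPF_∞`: reflexive-transitive closure of `z < (i,j) z (i,j)`
whenever `i < j` and `ℓ_fpf` goes up by exactly one. -/
def fpfBruhatLe (z y : Equiv.Perm ℕ) : Prop :=
  Relation.ReflTransGen
    (fun a b => ∃ i j : ℕ, 1 ≤ i ∧ i < j ∧
      b = Equiv.swap i j * a * Equiv.swap i j ∧ ellFpf b = ellFpf a + 1) z y

/-- `i` is a visible descent of `z` if `i ≥ 1` and `z(i+1) < min(i, z(i))`. -/
def visibleDescent (z : Equiv.Perm ℕ) (i : ℕ) : Prop :=
  1 ≤ i ∧ z (i + 1) < min i (z i)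

/-- `Ψ(z, p) = {(p,r) z (p,r) : r > p, ℓ_fpf((p,r) z (p,r)) = ℓ_fpf(z) + 1}`. -/
def PsiSet (z : Equiv.Perm ℕ) (p : ℕ) : Set (Equiv.Perm ℕ) :=
  {y | ∃ r : ℕ, p < r ∧ y = Equiv.swap p r * z * Equiv.swap p r ∧ ellFpf y = ellFpf z + 1}

/-- The dominant component `dom(z) = {(i,j) : i, j ≥ 1, r_z(i,j) = 0}`. -/
def domSet (z : Equiv.Perm ℕ) : Set (ℕ × ℕ) :=
  {p | 1 ≤ p.1 ∧ 1 ≤ p.2 ∧ rnk z p.1 p.2 = 0}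

/-- `(p, q)` is an outer corner of `dom(z)`. -/
def IsOuterCorner (z : Equiv.Perm ℕ) (p q : ℕ) : Prop :=
  1 ≤ p ∧ 1 ≤ q ∧ (p, q) ∉ domSet z ∧
    (p = 1 ∨ (p - 1, q) ∈ domSet z) ∧ (q = 1 ∨ (p, q - 1) ∈ domSet z)

/-- `I_n`: involutions in `S_∞` fixing every `i > n`. -/
def InvolIn (n : ℕ) : Set (Equiv.Perm ℕ) :=
  {w | w 0 = 0 ∧ w * w = 1 ∧ ∀ i, n < i → w i = i}

/-- The fixed points of `z` lying in `[n]`. -/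
def fixedPtsIn (n : ℕ) (z : Equiv.Perm ℕ) : Finset ℕ :=
  (Finset.Icc 1 n).filter fun i => z i = i

/-- The function swapping `m + 2t - 1` and `m + 2t` for every `t ≥ 1`, fixing all other points. -/
def tailSwapFun (m : ℕ) : ℕ → ℕ := fun i =>
  if i ≤ m then i else if (i - m) % 2 = 1 then i + 1 else i - 1

theorem tailSwapFun_involutive (m : ℕ) : Function.Involutive (tailSwapFun m) := by
  intro i
  unfold tailSwapFun
  split_ifs <;> omega

/-- The involution swapping `m + 2t - 1` and `m + 2t` for every `t ≥ 1`. -/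
def tailSwap (m : ℕ) : Equiv.Perm ℕ :=
  Function.Involutive.toPerm _ (tailSwapFun_involutive m)

/-- The fixed-point-free standardization `FPF_n(z) = z ⋅ (i_1,n+1)⋯(i_k,n+k) ⋅ c`,
where `i_1 < ⋯ < i_k` are the fixed points of `z` in `[n]` and `c` swaps
`n+k+2t-1, n+k+2t` for all `t ≥ 1`. -/
noncomputable def fpfStd (n : ℕ) (z : Equiv.Perm ℕ) : Equiv.Perm ℕ :=
  z *
    (List.ofFn fun t : Fin (fixedPtsIn n z).card =>
      Equiv.swap ((fixedPtsIn n z).orderEmbOfFin rfl t) (n + (t : ℕ) + 1)).prod *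
    tailSwap (n + (fixedPtsIn n z).card)

/-- `Mat^ss_n(K)`: skew-symmetric `n × n` matrices (transpose is the negative, zero diagonal).
Row/column index `a : Fin n` corresponds to the (1-indexed) row/column `a + 1`. -/
def MatSS (K : Type*) [CommRing K] (n : ℕ) : Set (Matrix (Fin n) (Fin n) K) :=
  {A | A.transpose = -A ∧ ∀ i, A i i = 0}

/-- The skew-symmetric matrix Schubert variety
`X^ss_z = {A ∈ Mat^ss_n : rank A_{[i][j]} ≤ r_z(i,j) for all i, j ∈ [n]}`. -/
noncomputable def Xss (K : Type*) [Field K] (n : ℕ) (z : Equiv.Perm ℕ) :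
    Set (Matrix (Fin n) (Fin n) K) :=
  {A | A ∈ MatSS K n ∧ ∀ (i j : ℕ) (hi : i ≤ n) (hj : j ≤ n), 1 ≤ i → 1 ≤ j →
    (A.submatrix (Fin.castLE hi) (Fin.castLE hj)).rank ≤ rnk z i j}

/-- `#{(i,j) : i > j, j < z(i), i < z(j)}` for a permutation of `Fin N`
(the `0`-indexed version of `ℓ_fpf`). -/
def ellFpfFin {N : ℕ} (z : Equiv.Perm (Fin N)) : ℕ :=
  (Finset.univ.filter fun p : Fin N × Fin N => p.2 < p.1 ∧ p.2 < z p.1 ∧ p.1 < z p.2).card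

/-- The Pfaffian of an `N × N` matrix:
`pf(A) = ∑_{z fpf involution of [N]} (-1)^{ℓ_fpf(z)} ∏_{z(i) < i} A_{z(i), i}`.
(The sum is empty, hence `0`, when `N` is odd.) -/
noncomputable def Pfaffian {R : Type*} [CommRing R] {N : ℕ} (A : Matrix (Fin N) (Fin N) R) : R :=
  ∑ z ∈ Finset.univ.filter (fun z : Equiv.Perm (Fin N) => (∀ i, z i ≠ i) ∧ ∀ i, z (z i) = i),
    (-1 : R) ^ ellFpfFin z * ∏ i ∈ Finset.univ.filter (fun i : Fin N => z i < i), A (z i) i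

/-- Index set for the variables `u_{ij}`, `n ≥ i > j ≥ 1`, of the coordinate ring
`R_n = K[Mat^ss_n]`; the variable `⟨(a, b), _⟩` is `u_{a+1, b+1}`. -/
abbrev SSVar (n : ℕ) : Type := {p : Fin n × Fin n // p.2 < p.1}

/-- The generic skew-symmetric matrix `U^ss` over `R_n`. -/
noncomputable def Uss (K : Type*) [CommRing K] (n : ℕ) :
    Matrix (Fin n) (Fin n) (MvPolynomial (SSVar n) K) :=
  Matrix.of fun i j =>
    if h : j < i then MvPolynomial.X ⟨(i, j), h⟩
    else if h' : i < j then -MvPolynomial.X ⟨(j, i), h'⟩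
    else 0

/-- The ideal of polynomials vanishing on a set `X`, where a point `A` is evaluated
via `ev A : σ → K`. -/
noncomputable def vanishingIdeal {K : Type*} [CommRing K] {σ M : Type*}
    (X : Set M) (ev : M → σ → K) : Ideal (MvPolynomial σ K) where
  carrier := {f | ∀ A ∈ X, MvPolynomial.eval (ev A) f = 0}
  zero_mem' := by simp
  add_mem' := by
    intro f g hf hg
    simp only [Set.mem_setOf_eq] at *
    intro A hA
    rw [map_add, hf A hA, hg A hA, add_zero]
  smul_mem' := by
    intro c f hf
    simp only [Set.mem_setOf_eq] at *
    intro A hA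
    rw [smul_eq_mul, map_mul, hf A hA, mul_zero]

/-- `I(X^ss_z) ⊆ R_n`, where `u_{ij}` is evaluated at `A` as `A_{ij}`. -/
noncomputable def IXss (K : Type*) [Field K] (n : ℕ) (z : Equiv.Perm ℕ) :
    Ideal (MvPolynomial (SSVar n) K) :=
  vanishingIdeal (Xss K n z) fun A v => A v.1.1 v.1.2

/-- `pf(U^ss_{RR})` for a finite row/column set `R` (listed in increasing order). -/
noncomputable def pfUss (K : Type*) [CommRing K] {n : ℕ} (R : Finset (Fin n)) :
    MvPolynomial (SSVar n) K :=
  Pfaffian ((Uss K n).submatrix (fun s => R.orderEmbOfFin rfl s) fun t => R.orderEmbOfFin rfl t)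

/-- The ideal `I^ss_z`, generated by the Pfaffians `pf(U^ss_{RR})` over all nonempty
even-size `R ⊆ [n]` such that `R ⊆ [i]` and `|R ∩ [j]| > r_z(i,j)` for some `i ≥ j`. -/
noncomputable def IssIdeal (K : Type*) [Field K] (n : ℕ) (z : Equiv.Perm ℕ) :
    Ideal (MvPolynomial (SSVar n) K) :=
  Ideal.span {f : MvPolynomial (SSVar n) K | ∃ R : Finset (Fin n),
    R.Nonempty ∧ Even R.card ∧
    (∃ i j : ℕ, 1 ≤ j ∧ j ≤ i ∧ i ≤ n ∧ (∀ a ∈ R, (a : ℕ) + 1 ≤ i) ∧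
      rnk z i j < (R.filter fun a : Fin n => (a : ℕ) + 1 ≤ j).card) ∧
    f = pfUss K R}

/-- The square-free monomial `u^ss_{AB}`: zero if `A ⊙ B` meets the diagonal, and otherwise
the product of the variables `u_{ij}` over the pairs `i > j` with `(i,j)` or `(j,i)` in
`A ⊙ B = {(a_0, b_r), (a_1, b_{r-1}), ..., (a_r, b_0)}`. -/
noncomputable def ussMon (K : Type*) [CommRing K] {n : ℕ} (A B : Finset (Fin n)) :
    MvPolynomial (SSVar n) K :=
  if h : A.card = B.card then
    if ∃ t : Fin A.card, (A.orderEmbOfFin rfl t : Fin n) = B.orderEmbOfFin h.symm t.rev then 0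
    else
      ∏ v ∈ Finset.univ.filter (fun v : SSVar n => ∃ t : Fin A.card,
          (A.orderEmbOfFin rfl t = v.1.1 ∧ B.orderEmbOfFin h.symm t.rev = v.1.2) ∨
          (A.orderEmbOfFin rfl t = v.1.2 ∧ B.orderEmbOfFin h.symm t.rev = v.1.1)),
        MvPolynomial.X v
  else 0

/-- The monomial ideal `J^ss_r` of a symmetric rank table `r`, generated by the monomials
`u^ss_{AB}` with `A ⊆ [i]`, `B ⊆ [j]`, `|A| = |B| = r(i,j) + 1` for some `n ≥ i ≥ j ≥ 1`. -/
noncomputable def JssIdealOfTable (K : Type*) [CommRing K] (n : ℕ) (r : ℕ → ℕ → ℕ) :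
    Ideal (MvPolynomial (SSVar n) K) :=
  Ideal.span {g : MvPolynomial (SSVar n) K | ∃ (i j : ℕ) (A B : Finset (Fin n)),
    1 ≤ j ∧ j ≤ i ∧ i ≤ n ∧
    (∀ a ∈ A, (a : ℕ) + 1 ≤ i) ∧ (∀ b ∈ B, (b : ℕ) + 1 ≤ j) ∧
    A.card = r i j + 1 ∧ B.card = r i j + 1 ∧ g = ussMon K A B}

/-- `J^ss_z = J^ss_{r_z}`. -/
noncomputable def JssIdeal (K : Type*) [CommRing K] (n : ℕ) (z : Equiv.Perm ℕ) :
    Ideal (MvPolynomial (SSVar n) K) :=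
  JssIdealOfTable K n (rnk z)

/-- Total degree of a monomial (exponent vector). -/
def totalDeg {σ : Type*} (m : σ →₀ ℕ) : ℕ := m.sum fun _ e => e

/-- The lexicographic order on the variables `u_{ij}` by the pair `(i, j)`. -/
def varLT {n : ℕ} (v w : SSVar n) : Prop :=
  v.1.1 < w.1.1 ∨ (v.1.1 = w.1.1 ∧ v.1.2 < w.1.2)

/-- The (graded) reverse lexicographic term order on monomials of `R_n`:
`m₁ < m₂` iff `deg m₁ < deg m₂`, or the degrees agree and the lexicographically largest
variable with different exponents has strictly larger exponent in `m₁`. -/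
def revlexLT {n : ℕ} (m₁ m₂ : SSVar n →₀ ℕ) : Prop :=
  totalDeg m₁ < totalDeg m₂ ∨
    (totalDeg m₁ = totalDeg m₂ ∧ ∃ v, m₂ v < m₁ v ∧ ∀ w, varLT v w → m₁ w = m₂ w)

/-- The initial ideal of `I` with respect to a strict term order `lt`: the ideal
generated by the leading monomials `init(f)` of the nonzero `f ∈ I`. -/
noncomputable def initIdeal {K : Type*} [CommRing K] {σ : Type*}
    (lt : (σ →₀ ℕ) → (σ →₀ ℕ) → Prop) (I : Ideal (MvPolynomial σ K)) :
    Ideal (MvPolynomial σ K) :=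
  Ideal.span {g : MvPolynomial σ K | ∃ f ∈ I, f ≠ 0 ∧ ∃ m : σ →₀ ℕ, m ∈ f.support ∧
    (∀ m' ∈ f.support, m' ≠ m → lt m' m) ∧ g = MvPolynomial.monomial m (1 : K)}

/-- A term order on the monomials of a polynomial ring: a linear order in which `1` is
the unique minimum and multiplication by a fixed monomial preserves order. -/
structure TermOrder (σ : Type*) where
  le : (σ →₀ ℕ) → (σ →₀ ℕ) → Prop
  trans : ∀ a b c, le a b → le b c → le a c
  antisymm : ∀ a b, le a b → le b a → a = b
  total : ∀ a b, le a b ∨ le b a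
  zero_le : ∀ a, le 0 a
  add_le_add_right : ∀ a b c, le a b → le (a + c) (b + c)

/-- The initial ideal of `I` with respect to a term order `τ`. -/
noncomputable def initIdealLe {K : Type*} [CommRing K] {σ : Type*}
    (τ : TermOrder σ) (I : Ideal (MvPolynomial σ K)) : Ideal (MvPolynomial σ K) :=
  Ideal.span {g : MvPolynomial σ K | ∃ f ∈ I, f ≠ 0 ∧ ∃ m : σ →₀ ℕ, m ∈ f.support ∧
    (∀ m' ∈ f.support, τ.le m' m) ∧ g = MvPolynomial.monomial m (1 : K)}

/-- An ideal is homogeneous (w.r.t. total degree) iff it contains all homogeneous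
components of its elements. -/
def IsHomogIdeal {K : Type*} [CommSemiring K] {σ : Type*}
    (I : Ideal (MvPolynomial σ K)) : Prop :=
  ∀ f ∈ I, ∀ d : ℕ, MvPolynomial.homogeneousComponent d f ∈ I

/-- The reading order on boxes: rows top to bottom, each row right to left. -/
def pdRel (p q : ℕ × ℕ) : Prop := p.1 < q.1 ∨ (p.1 = q.1 ∧ q.2 ≤ p.2)

instance : DecidableRel pdRel := fun p q => by unfold pdRel; infer_instance

instance : IsTrans (ℕ × ℕ) pdRel :=
  ⟨fun a b c hab hbc => by unfold pdRel at *; omega⟩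

instance : IsAntisymm (ℕ × ℕ) pdRel :=
  ⟨fun a b hab hba => by
    unfold pdRel at hab hba
    exact Prod.ext_iff.mpr ⟨by omega, by omega⟩⟩

instance : IsTotal (ℕ × ℕ) pdRel :=
  ⟨fun a b => by unfold pdRel; omega⟩

/-- The pipe dream reading word of a finite set `D` of boxes: the letters `i + j - 1`
over `(i, j) ∈ D`, in the order making `(i, -j)` increase lexicographically. -/
def pdWord (D : Finset (ℕ × ℕ)) : List ℕ :=
  (D.sort pdRel).map fun p => p.1 + p.2 - 1

/-- The product `s_{i_1} s_{i_2} ⋯ s_{i_l}` of simple transpositions. -/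
def wordProd (l : List ℕ) : Equiv.Perm ℕ :=
  (l.map fun i => Equiv.swap i (i + 1)).prod

/-- `l` is a reduced word for `w`: a minimal-length word of positive letters whose
product of simple transpositions is `w`. -/
def IsReducedWordOf (w : Equiv.Perm ℕ) (l : List ℕ) : Prop :=
  (∀ a ∈ l, 1 ≤ a) ∧ wordProd l = w ∧
    ∀ l' : List ℕ, (∀ a ∈ l', 1 ≤ a) → wordProd l' = w → l.length ≤ l'.length

/-- The set `RP(w)` of reduced pipe dreams for `w`. -/
def RP (w : Equiv.Perm ℕ) : Set (Finset (ℕ × ℕ)) :=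
  {D | (∀ p ∈ D, 1 ≤ p.1 ∧ 1 ≤ p.2) ∧ IsReducedWordOf w (pdWord D)}

/-- `I^FPF_m`: involutions in `S_∞` that are fixed-point-free on `[m]` and fix
all `i > m`. -/
def IFPFm (m : ℕ) : Set (Equiv.Perm ℕ) :=
  {y | y 0 = 0 ∧ y * y = 1 ∧ (∀ i, 1 ≤ i → i ≤ m → y i ≠ i) ∧ ∀ i, m < i → y i = i}

/-- `z = FPF_m(y)`: `z` agrees with `y` on `[m]` and swaps `m + 2k - 1, m + 2k`
for all `k ≥ 1`. -/
def IsFPFStdOf (m : ℕ) (y z : Equiv.Perm ℕ) : Prop :=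
  (∀ i, i ≤ m → z i = y i) ∧
    ∀ k : ℕ, z (m + 2 * k + 1) = m + 2 * k + 2 ∧ z (m + 2 * k + 2) = m + 2 * k + 1

/-- The set `FP(z)` of fpf-involution pipe dreams for `z ∈ I^FPF_∞`. -/
def FP (z : Equiv.Perm ℕ) : Set (Finset (ℕ × ℕ)) :=
  {E | ∃ (m : ℕ) (y : Equiv.Perm ℕ) (D : Finset (ℕ × ℕ)), Even m ∧ y ∈ IFPFm m ∧
    IsFPFStdOf m y z ∧ D ∈ RP y ∧ D.image Prod.swap = D ∧
    E = D.filter fun p => p.2 < p.1}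

/-- The minor `det(U_{AB})` of the generic `m × n` matrix `U`, with rows `A` and
columns `B` listed in increasing order. -/
noncomputable def genMinor (K : Type*) [CommRing K] {m n : ℕ}
    (A : Finset (Fin m)) (B : Finset (Fin n)) (h : A.card = B.card) :
    MvPolynomial (Fin m × Fin n) K :=
  (Matrix.of fun s t : Fin A.card =>
    (MvPolynomial.X (A.orderEmbOfFin rfl s, B.orderEmbOfFin h.symm t) :
      MvPolynomial (Fin m × Fin n) K)).det

/-- The antidiagonal monomial `u_{AB} = ∏_{(a,b) ∈ A ⊙ B} u_{ab}`. -/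
noncomputable def genMon (K : Type*) [CommRing K] {m n : ℕ}
    (A : Finset (Fin m)) (B : Finset (Fin n)) (h : A.card = B.card) :
    MvPolynomial (Fin m × Fin n) K :=
  ∏ t : Fin A.card, MvPolynomial.X (A.orderEmbOfFin rfl t, B.orderEmbOfFin h.symm t.rev)

/-- The exponent vector of the antidiagonal monomial `u_{AB}`. -/
noncomputable def antidiagExp {m n : ℕ} (A : Finset (Fin m)) (B : Finset (Fin n))
    (h : A.card = B.card) : (Fin m × Fin n) →₀ ℕ :=
  ∑ t : Fin A.card, Finsupp.single (A.orderEmbOfFin rfl t, B.orderEmbOfFin h.symm t.rev) 1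

/-- The ideal `I_w`, generated by the minors `det(U_{AB})` with `A ⊆ [i]`, `B ⊆ [j]`,
`|A| = |B| = r_w(i,j) + 1` for some `(i,j) ∈ [m] × [n]`. -/
noncomputable def IwIdeal (K : Type*) [Field K] (m n : ℕ) (w : Equiv.Perm ℕ) :
    Ideal (MvPolynomial (Fin m × Fin n) K) :=
  Ideal.span {g : MvPolynomial (Fin m × Fin n) K |
    ∃ (i j : ℕ) (A : Finset (Fin m)) (B : Finset (Fin n)) (h : A.card = B.card),
      1 ≤ i ∧ i ≤ m ∧ 1 ≤ j ∧ j ≤ n ∧ (∀ a ∈ A, (a : ℕ) + 1 ≤ i) ∧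
      (∀ b ∈ B, (b : ℕ) + 1 ≤ j) ∧ A.card = rnk w i j + 1 ∧ g = genMinor K A B h}

/-- The monomial ideal `J_w`, generated by the monomials `u_{AB}` with `A ⊆ [i]`,
`B ⊆ [j]`, `|A| = |B| = r_w(i,j) + 1` for some `(i,j) ∈ [m] × [n]`. -/
noncomputable def JwIdeal (K : Type*) [Field K] (m n : ℕ) (w : Equiv.Perm ℕ) :
    Ideal (MvPolynomial (Fin m × Fin n) K) :=
  Ideal.span {g : MvPolynomial (Fin m × Fin n) K |
    ∃ (i j : ℕ) (A : Finset (Fin m)) (B : Finset (Fin n)) (h : A.card = B.card),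
      1 ≤ i ∧ i ≤ m ∧ 1 ≤ j ∧ j ≤ n ∧ (∀ a ∈ A, (a : ℕ) + 1 ≤ i) ∧
      (∀ b ∈ B, (b : ℕ) + 1 ≤ j) ∧ A.card = rnk w i j + 1 ∧ g = genMon K A B h}

/-- The matrix Schubert variety
`X_w = {A ∈ Mat_{m×n} : rank A_{[i][j]} ≤ r_w(i,j) for all (i,j) ∈ [m] × [n]}`. -/
noncomputable def Xw (K : Type*) [Field K] (m n : ℕ) (w : Equiv.Perm ℕ) :
    Set (Matrix (Fin m) (Fin n) K) :=
  {A | ∀ (i j : ℕ) (hi : i ≤ m) (hj : j ≤ n), 1 ≤ i → 1 ≤ j →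
    (A.submatrix (Fin.castLE hi) (Fin.castLE hj)).rank ≤ rnk w i j}

/-- `I(X_w)`: the ideal of polynomials vanishing on `X_w`. -/
noncomputable def IXw (K : Type*) [Field K] (m n : ℕ) (w : Equiv.Perm ℕ) :
    Ideal (MvPolynomial (Fin m × Fin n) K) :=
  vanishingIdeal (Xw K m n w) fun A v => A v.1 v.2

/-- The variable `u_{pq}` (with `1 ≤ q < p ≤ n`) of `R_n`. -/
def ssvar {n : ℕ} (p q : ℕ) (hp : p ≤ n) (hq : 1 ≤ q) (hqp : q < p) : SSVar n :=
  ⟨(⟨p - 1, by omega⟩, ⟨q - 1, by omega⟩), Fin.mk_lt_mk.mpr (by omega)⟩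

/-- Index set for the variables `u_{ij}`, `i > j ≥ 1`, over all positive integers. -/
abbrev PVar : Type := {p : ℕ × ℕ // 1 ≤ p.2 ∧ p.2 < p.1}

/-- The generic skew-symmetric array `U^ss` over the positive integers:
`u_{xy}` if `x > y`, `-u_{yx}` if `x < y`, `0` if `x = y`. -/
noncomputable def UssP (K : Type*) [CommRing K] (x y : ℕ) : MvPolynomial PVar K :=
  if h : 1 ≤ y ∧ y < x then MvPolynomial.X ⟨(x, y), h⟩
  else if h' : 1 ≤ x ∧ x < y then -MvPolynomial.X ⟨(y, x), h'⟩
  else 0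

/-- `pf(U^ss_{RR})` for a finite set `R` of positive integers. -/
noncomputable def pfUssP (K : Type*) [CommRing K] (R : Finset ℕ) : MvPolynomial PVar K :=
  Pfaffian (Matrix.of fun s t : Fin R.card =>
    UssP K (R.orderEmbOfFin rfl s) (R.orderEmbOfFin rfl t))

/-- `g_{AB}`: the Pfaffian of the `(|B|+|A|) × (|B|+|A|)` skew-symmetric matrix whose
rows and columns are labeled by `B` (increasing) followed by `A` (increasing), with
entry `U^ss_{xy}` at a position labeled `(x, y)`, except that the entry is `0` when
both labels come from the `A`-block. -/
noncomputable def gAB (K : Type*) [CommRing K] (A B : Finset ℕ) : MvPolynomial PVar K :=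
  Pfaffian ((Matrix.of fun p q : Fin B.card ⊕ Fin A.card =>
      match p, q with
      | Sum.inl s, Sum.inl t => UssP K (B.orderEmbOfFin rfl s) (B.orderEmbOfFin rfl t)
      | Sum.inl s, Sum.inr t => UssP K (B.orderEmbOfFin rfl s) (A.orderEmbOfFin rfl t)
      | Sum.inr s, Sum.inl t => UssP K (A.orderEmbOfFin rfl s) (B.orderEmbOfFin rfl t)
      | Sum.inr _, Sum.inr _ => (0 : MvPolynomial PVar K)).submatrix
    finSumFinEquiv.symm finSumFinEquiv.symm)

/-- The exponent of the sign `⟨T, S⟩ = (-1)^{|S||T| + C(|S|,2) + ∑ of the (1-indexed)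
positions in the increasing enumeration of `T` occupied by elements of `S`}`. -/
def setSgnExp (T S : Finset ℕ) : ℕ :=
  S.card * T.card + Nat.choose S.card 2 +
    ∑ t : Fin T.card, if T.orderEmbOfFin rfl t ∈ S then (t : ℕ) + 1 else 0


/-!
For an alternating form `ω`, the Pfaffian of the Gram matrix of `v 0, …, v (N - 1)` is an
alternating function of `v`: it is the constant term of the image of `v 0 ∧ ⋯ ∧ v (N - 1)` under
the automorphism of the exterior algebra that deforms the zero quadratic form by `-ω`, since both
sides satisfy the same expansion along the first vector. Hence the Pfaffian is multiplied by the
determinant under a change of basis, and splitting off hyperbolic planes shows that it vanishes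
exactly when `ω` is degenerate, that is, when the determinant vanishes.

It remains to compare `rank A_{[i][j]}` with the nonsingular principal submatrices `A_{RR}`. If
`A_{RR}` is nonsingular, its columns in `[j]` are independent, so `|R ∩ [j]| ≤ rank A_{[i][j]}`.
Conversely, extend a maximal independent set of the first `j` columns of `A_{[i][i]}` to a maximal
independent set `R` of all its columns. By skew-symmetry the rows in `R` also span the row space,
so `A_{RR}` is nonsingular, and `|R ∩ [j]|` is at least `rank A_{[i][j]}`.
-/

section Expansion

variable {N : ℕ}

/-- The increasing enumeration of `Fin (N + 2) \ {0, k + 1}`, the indices that remain when the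
Pfaffian is expanded along the pair `(0, k + 1)`. -/
def skipPair (k : Fin (N + 1)) : Fin N ↪o Fin (N + 2) :=
  k.succAboveOrderEmb.trans (Fin.succOrderEmb (N + 1))

theorem skipPair_apply (k : Fin (N + 1)) (x : Fin N) : skipPair k x = (k.succAbove x).succ :=
  rfl

theorem skipPair_ne_zero (k : Fin (N + 1)) (x : Fin N) : skipPair k x ≠ 0 :=
  Fin.succ_ne_zero _

theorem skipPair_ne_succ (k : Fin (N + 1)) (x : Fin N) : skipPair k x ≠ k.succ := by
  simp [skipPair_apply]

theorem eq_zero_or_eq_succ_or_eq_skipPair (k : Fin (N + 1)) (y : Fin (N + 2)) :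
    y = 0 ∨ y = k.succ ∨ ∃ x, y = skipPair k x := by
  induction y using Fin.cases with
  | zero => exact .inl rfl
  | succ y =>
    rcases Fin.eq_self_or_eq_succAbove k y with rfl | ⟨x, rfl⟩
    · exact .inr (.inl rfl)
    · exact .inr (.inr ⟨x, rfl⟩)

theorem prod_univ_eq_mul_prod_skipPair {M : Type*} [CommMonoid M] (k : Fin (N + 1))
    (f : Fin (N + 2) → M) : ∏ i, f i = f 0 * (f k.succ * ∏ x, f (skipPair k x)) := by
  rw [Fin.prod_univ_succ, Fin.prod_univ_succAbove _ k]
  rfl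

theorem sum_univ_eq_add_sum_skipPair {M : Type*} [AddCommMonoid M] (k : Fin (N + 1))
    (f : Fin (N + 2) → M) : ∑ i, f i = f 0 + (f k.succ + ∑ x, f (skipPair k x)) :=
  prod_univ_eq_mul_prod_skipPair (M := Multiplicative M) k f

/-- The permutation that swaps `0` with `k + 1` and acts as `z` on the remaining indices. -/
noncomputable def extendBySwap (k : Fin (N + 1)) (z : Equiv.Perm (Fin N)) :
    Equiv.Perm (Fin (N + 2)) :=
  Equiv.swap 0 k.succ * z.viaEmbedding (skipPair k).toEmbedding

section extendBySwap

variable (k : Fin (N + 1)) (z : Equiv.Perm (Fin N))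

@[simp]
theorem extendBySwap_zero : extendBySwap k z 0 = k.succ := by
  rw [extendBySwap, Equiv.Perm.mul_apply, Equiv.Perm.viaEmbedding_apply_of_notMem,
    Equiv.swap_apply_left]
  rintro ⟨x, hx⟩
  exact skipPair_ne_zero k x hx

@[simp]
theorem extendBySwap_succ : extendBySwap k z k.succ = 0 := by
  rw [extendBySwap, Equiv.Perm.mul_apply, Equiv.Perm.viaEmbedding_apply_of_notMem,
    Equiv.swap_apply_right]
  rintro ⟨x, hx⟩
  exact skipPair_ne_succ k x hx

@[simp]
theorem extendBySwap_skipPair (x : Fin N) :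
    extendBySwap k z (skipPair k x) = skipPair k (z x) := by
  have hz : z.viaEmbedding (skipPair k).toEmbedding (skipPair k x) = skipPair k (z x) :=
    z.viaEmbedding_apply (skipPair k).toEmbedding x
  rw [extendBySwap, Equiv.Perm.mul_apply, hz,
    Equiv.swap_apply_of_ne_of_ne (skipPair_ne_zero k _) (skipPair_ne_succ k _)]

theorem forall_extendBySwap_ne_iff :
    (∀ i, extendBySwap k z i ≠ i) ↔ ∀ x, z x ≠ x := by
  refine ⟨fun h x hx => h (skipPair k x) (by rw [extendBySwap_skipPair, hx]), fun h i => ?_⟩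
  rcases eq_zero_or_eq_succ_or_eq_skipPair k i with rfl | rfl | ⟨x, rfl⟩
  · simp
  · simpa using (Fin.succ_ne_zero k).symm
  · simpa using h x

theorem involutive_extendBySwap_iff :
    Function.Involutive (extendBySwap k z) ↔ Function.Involutive z := by
  refine ⟨fun h x => (skipPair k).injective ?_, fun h i => ?_⟩
  · simpa using h (skipPair k x)
  · rcases eq_zero_or_eq_succ_or_eq_skipPair k i with rfl | rfl | ⟨x, rfl⟩
    · simp
    · simp
    · simp [h x]

theorem extendBySwap_injective2 :
    Function.Injective2 (extendBySwap : Fin (N + 1) → Equiv.Perm (Fin N) → _) := by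
  intro k l z w h
  obtain rfl : k = l := by simpa using DFunLike.congr_fun h 0
  exact ⟨rfl, Equiv.ext fun x => by simpa using DFunLike.congr_fun h (skipPair k x)⟩

end extendBySwap

theorem exists_extendBySwap_eq {w : Equiv.Perm (Fin (N + 2))} (hw : Function.Involutive w)
    (hw0 : w 0 ≠ 0) : ∃ k z, extendBySwap k z = w := by
  obtain ⟨k, hk⟩ := Fin.exists_succ_eq.mpr hw0
  have hwk : w k.succ = 0 := by rw [hk, hw]
  have hmem (x : Fin N) : ∃ y, w (skipPair k x) = skipPair k y := by
    rcases eq_zero_or_eq_succ_or_eq_skipPair k (w (skipPair k x)) with h | h | h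
    · exact absurd (w.injective (h.trans hwk.symm)) (skipPair_ne_succ k x)
    · exact absurd (w.injective (h.trans hk)) (skipPair_ne_zero k x)
    · exact h
  choose f hf using hmem
  have hinv : Function.Involutive f := fun x =>
    (skipPair k).injective (by rw [← hf, ← hf, hw])
  refine ⟨k, hinv.toPerm, Equiv.ext fun i => ?_⟩
  rcases eq_zero_or_eq_succ_or_eq_skipPair k i with rfl | rfl | ⟨x, rfl⟩
  · rw [extendBySwap_zero, hk]
  · rw [extendBySwap_succ, hwk]
  · rw [extendBySwap_skipPair, hf, hinv.coe_toPerm]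

theorem ellFpfFin_eq_sum (z : Equiv.Perm (Fin N)) :
    ellFpfFin z = ∑ j, ∑ i, if j < i ∧ j < z i ∧ i < z j then 1 else 0 := by
  rw [ellFpfFin, Finset.card_filter, Fintype.sum_prod_type_right]

theorem ellFpfFin_extendBySwap (k : Fin (N + 1)) (z : Equiv.Perm (Fin N)) :
    ellFpfFin (extendBySwap k z) = k + ellFpfFin z := by
  have hzero (i : Fin (N + 2)) :
      (0 < i ∧ 0 < extendBySwap k z i ∧ i < k.succ) ↔ i ∈ Finset.Ioo 0 k.succ := by
    rcases eq_zero_or_eq_succ_or_eq_skipPair k i with rfl | rfl | ⟨x, rfl⟩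
    · simp
    · simp
    · simp [Fin.pos_iff_ne_zero, skipPair_ne_zero]
  have hcard : (∑ i, if 0 < i ∧ 0 < extendBySwap k z i ∧ i < k.succ then 1 else 0) = (k : ℕ) := by
    simp_rw [hzero, Finset.sum_boole, Finset.filter_univ_mem]
    simp
  rw [ellFpfFin_eq_sum, ellFpfFin_eq_sum, sum_univ_eq_add_sum_skipPair k]
  simp only [extendBySwap_zero, hcard, extendBySwap_succ, Fin.not_lt_zero, and_false, if_false,
    Finset.sum_const_zero, zero_add, extendBySwap_skipPair, OrderEmbedding.lt_iff_lt,
    sum_univ_eq_add_sum_skipPair k, false_and]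

variable {R : Type*} [CommRing R]

theorem prod_filter_extendBySwap (A : Matrix (Fin (N + 2)) (Fin (N + 2)) R) (k : Fin (N + 1))
    (z : Equiv.Perm (Fin N)) :
    ∏ i with extendBySwap k z i < i, A (extendBySwap k z i) i =
      A 0 k.succ * ∏ i with z i < i, A.submatrix (skipPair k) (skipPair k) (z i) i := by
  simp [Finset.prod_filter, prod_univ_eq_mul_prod_skipPair k]

theorem pfaffian_succ_succ (A : Matrix (Fin (N + 2)) (Fin (N + 2)) R) :
    Pfaffian A = ∑ k : Fin (N + 1),
      (-1) ^ (k : ℕ) * A 0 k.succ * Pfaffian (A.submatrix (skipPair k) (skipPair k)) := by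
  simp only [Pfaffian, Finset.mul_sum]
  symm
  refine (Finset.sum_product' _ _ _).symm.trans
    (Finset.sum_nbij (fun p => extendBySwap p.1 p.2) ?_ ?_ ?_ ?_)
  · rintro ⟨k, z⟩ hz
    simp only [Finset.mem_product, Finset.mem_filter, Finset.mem_univ, true_and] at hz ⊢
    exact ⟨(forall_extendBySwap_ne_iff k z).mpr hz.1, (involutive_extendBySwap_iff k z).mpr hz.2⟩
  · exact extendBySwap_injective2.uncurry.injOn
  · intro w hw
    simp only [Finset.coe_filter, Finset.mem_univ, true_and, Set.mem_ofPred_eq] at hw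
    obtain ⟨k, z, rfl⟩ := exists_extendBySwap_eq hw.2 (hw.1 0)
    refine ⟨(k, z), ?_, rfl⟩
    simpa using ⟨(forall_extendBySwap_ne_iff k z).mp hw.1,
      (involutive_extendBySwap_iff k z).mp hw.2⟩
  · rintro ⟨k, z⟩ -
    rw [prod_filter_extendBySwap, ellFpfFin_extendBySwap]
    ring

theorem pfaffian_fin_zero (A : Matrix (Fin 0) (Fin 0) R) : Pfaffian A = 1 := by
  simp [Pfaffian, ellFpfFin]

theorem pfaffian_fin_one (A : Matrix (Fin 1) (Fin 1) R) : Pfaffian A = 0 := by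
  refine Finset.sum_eq_zero fun z hz => ?_
  exact absurd (Subsingleton.elim _ _) ((Finset.mem_filter.mp hz).2.1 0)

theorem pfaffian_eq_zero_of_odd : ∀ {N : ℕ} (_ : Odd N) (A : Matrix (Fin N) (Fin N) R),
    Pfaffian A = 0
  | 1, _, A => pfaffian_fin_one A
  | N + 2, hN, A => by
    have hN' : Odd N := by simpa [Nat.odd_add] using hN
    simp [pfaffian_succ_succ, pfaffian_eq_zero_of_odd hN']

end Expansion

section Alternating

open LinearMap.BilinForm

variable {R M : Type*} [CommRing R] [AddCommGroup M] [Module R M]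

theorem contractLeft_ιMulti_succ (d : Module.Dual R M) : ∀ {N : ℕ} (v : Fin (N + 1) → M),
    CliffordAlgebra.contractLeft (Q := (0 : QuadraticForm R M)) d
        (ExteriorAlgebra.ιMulti R (N + 1) v) =
      ∑ k : Fin (N + 1),
        ((-1) ^ (k : ℕ) * d (v k)) • ExteriorAlgebra.ιMulti R N (v ∘ k.succAbove)
  | 0, v => by
    rw [ExteriorAlgebra.ιMulti_succ_apply, CliffordAlgebra.contractLeft_ι_mul]
    simp
  | N + 1, v => by
    have htail (k : Fin (N + 1)) :
        Matrix.vecTail (v ∘ k.succ.succAbove) = Matrix.vecTail v ∘ k.succAbove := by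
      funext x
      simp [Matrix.vecTail]
    rw [ExteriorAlgebra.ιMulti_succ_apply, CliffordAlgebra.contractLeft_ι_mul,
      contractLeft_ιMulti_succ d, Finset.mul_sum, Fin.sum_univ_succ (n := N + 1), sub_eq_add_neg,
      ← Finset.sum_neg_distrib]
    congr 1
    · simp [Matrix.vecTail, Function.comp_def]
    · refine Finset.sum_congr rfl fun k _ => ?_
      rw [ExteriorAlgebra.ιMulti_succ_apply, htail, mul_smul_comm, ← neg_smul]
      congr 1
      simp [Matrix.vecTail, pow_succ]

theorem toQuadraticMap_neg_eq_zero_sub_zero {ω : LinearMap.BilinForm R M} (hω : ω.IsAlt) :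
    (-ω).toQuadraticMap = (0 : QuadraticForm R M) - 0 := by
  rw [sub_zero, LinearMap.BilinMap.toQuadraticMap_eq_zero]
  exact hω.neg

/-- The Pfaffian of the Gram matrix of an alternating form `ω`, as an alternating map: the degree
zero part of the automorphism `CliffordAlgebra.changeForm` of the exterior algebra determined by
`-ω`, evaluated at `v 0 ∧ ⋯ ∧ v (N - 1)`. -/
noncomputable def pfaffianAlternating {ω : LinearMap.BilinForm R M} (hω : ω.IsAlt) (N : ℕ) :
    M [⋀^Fin N]→ₗ[R] R :=
  (ExteriorAlgebra.algebraMapInv.toLinearMap ∘ₗ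
    CliffordAlgebra.changeForm (toQuadraticMap_neg_eq_zero_sub_zero hω)).compAlternatingMap
      (ExteriorAlgebra.ιMulti R N)

theorem algebraMapInv_ι (x : M) :
    ExteriorAlgebra.algebraMapInv (CliffordAlgebra.ι (0 : QuadraticForm R M) x) = 0 := by
  simp [ExteriorAlgebra.algebraMapInv]

variable {ω : LinearMap.BilinForm R M} (hω : ω.IsAlt)

theorem pfaffianAlternating_succ_succ {N : ℕ} (v : Fin (N + 2) → M) :
    pfaffianAlternating hω (N + 2) v = ∑ k : Fin (N + 1),
      (-1) ^ (k : ℕ) * ω (v 0) (v k.succ) * pfaffianAlternating hω N (v ∘ skipPair k) := by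
  simp only [pfaffianAlternating, LinearMap.compAlternatingMap_apply, LinearMap.comp_apply]
  rw [ExteriorAlgebra.ιMulti_succ_apply, CliffordAlgebra.changeForm_ι_mul,
    ← CliffordAlgebra.changeForm_contractLeft, contractLeft_ιMulti_succ]
  simp only [map_sub, map_sum, map_smul, AlgHom.toLinearMap_apply, map_mul, algebraMapInv_ι,
    zero_mul, zero_sub, ← Finset.sum_neg_distrib]
  refine Finset.sum_congr rfl fun k _ => ?_
  simp [Matrix.vecTail, Function.comp_def, skipPair_apply]

theorem pfaffianAlternating_apply : ∀ {N : ℕ} (v : Fin N → M),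
    pfaffianAlternating hω N v = Pfaffian (toMatrixAux v ω)
  | 0, v => by
    simp [pfaffian_fin_zero, pfaffianAlternating]
  | 1, v => by
    simp [pfaffian_fin_one, pfaffianAlternating, algebraMapInv_ι]
  | N + 2, v => by
    rw [pfaffianAlternating_succ_succ, pfaffian_succ_succ]
    refine Finset.sum_congr rfl fun k _ => ?_
    rw [pfaffianAlternating_apply, toMatrixAux_apply]
    rfl

end Alternating

section Nondegenerate

open LinearMap.BilinForm

theorem pfaffian_eq_zero_of_row_col_eq_zero {R : Type*} [CommRing R] {N : ℕ}
    {A : Matrix (Fin N) (Fin N) R} {a : Fin N} (hrow : ∀ b, A a b = 0) (hcol : ∀ b, A b a = 0) :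
    Pfaffian A = 0 := by
  refine Finset.sum_eq_zero fun z hz => mul_eq_zero_of_right _ ?_
  obtain ⟨hne, hinv⟩ := (Finset.mem_filter.mp hz).2
  rcases lt_or_gt_of_ne (hne a) with hlt | hgt
  · exact Finset.prod_eq_zero (Finset.mem_filter.mpr ⟨Finset.mem_univ a, hlt⟩) (hcol _)
  · refine Finset.prod_eq_zero (i := z a) (by simpa [hinv a] using hgt) ?_
    rw [hinv a, hrow]

theorem pfaffian_toMatrixAux_cons_cons {R M : Type*} [CommRing R] [AddCommGroup M] [Module R M]
    {ω : LinearMap.BilinForm R M} {N : ℕ} {x y : M} {u : Fin N → M} (hx : ∀ k, ω x (u k) = 0) :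
    Pfaffian (toMatrixAux (Fin.cons x (Fin.cons y u) : Fin (N + 2) → M) ω) =
      ω x y * Pfaffian (toMatrixAux u ω) := by
  rw [pfaffian_succ_succ, Fin.sum_univ_succ, Finset.sum_eq_zero]
  · have hminor : (toMatrixAux (Fin.cons x (Fin.cons y u) : Fin (N + 2) → M) ω).submatrix
        (skipPair 0) (skipPair 0) = toMatrixAux u ω := by
      ext
      simp [skipPair_apply]
    simp [hminor]
  · intro k _
    simp [hx]

theorem alternatingMap_update_basis {R M N ι : Type*} [CommRing R] [AddCommGroup M] [Module R M]
    [AddCommGroup N] [Module R N] [Finite ι] [DecidableEq ι] (f : M [⋀^ι]→ₗ[R] N)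
    (b : Module.Basis ι R M) (i : ι) (x : M) :
    f (Function.update b i x) = b.repr x i • f b := by
  cases nonempty_fintype ι
  conv_lhs => rw [← b.sum_repr x]
  rw [AlternatingMap.map_update_sum, Finset.sum_eq_single i]
  · rw [AlternatingMap.map_update_smul, Function.update_eq_self]
  · intro j _ hji
    rw [AlternatingMap.map_update_smul, AlternatingMap.map_update_self _ _ hji.symm, smul_zero]
  · simp

section Field

variable {K V : Type*} [Field K] [AddCommGroup V] [Module K V] {ω : LinearMap.BilinForm K V}

theorem linearIndependent_pair_of_apply_ne_zero (hω : ω.IsAlt) {x y : V} (hxy : ω x y ≠ 0) :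
    LinearIndependent K ![x, y] := by
  rw [LinearIndependent.pair_iff]
  intro a b hab
  constructor
  · simpa [hω.self_eq_zero, hxy] using congr_arg (ω · y) hab
  · simpa [hω.self_eq_zero, hxy] using congr_arg (ω x) hab

theorem disjoint_span_pair_orthogonal (hω : ω.IsAlt) {x y : V} (hxy : ω x y ≠ 0) :
    Disjoint (Submodule.span K {x, y}) (ω.orthogonal (Submodule.span K {x, y})) := by
  rw [Submodule.disjoint_def]
  intro v hv hvo
  obtain ⟨a, b, rfl⟩ := Submodule.mem_span_pair.mp hv
  have hyx : ω y x ≠ 0 := mt hω.eq_iff.mpr hxy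
  have hx := hvo x (Submodule.subset_span (by simp))
  have hy := hvo y (Submodule.subset_span (by simp))
  have hb : b = 0 := by simpa [hω.self_eq_zero, hxy] using hx
  have ha : a = 0 := by simpa [hω.self_eq_zero, hyx] using hy
  simp [ha, hb]

theorem exists_pfaffian_toMatrixAux_ne_zero [FiniteDimensional K V] (hω : ω.IsAlt)
    (hnd : ω.Nondegenerate) {N : ℕ} (hN : Module.finrank K V = N) :
    ∃ v : Fin N → V, Pfaffian (toMatrixAux v ω) ≠ 0 := by
  induction N using Nat.strong_induction_on generalizing V with
  | h N ih =>
    rcases Nat.eq_zero_or_pos N with rfl | hpos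
    · exact ⟨Fin.elim0, by simp [pfaffian_fin_zero]⟩
    have : Nontrivial V := Module.nontrivial_of_finrank_pos (R := K) (hN ▸ hpos)
    obtain ⟨x, hx⟩ := exists_ne (0 : V)
    obtain ⟨y, hxy⟩ : ∃ y, ω x y ≠ 0 := by
      by_contra! h
      exact hx (hnd.1 x h)
    set P := Submodule.span K {x, y} with hP
    have hdisj : Disjoint P (ω.orthogonal P) := disjoint_span_pair_orthogonal hω hxy
    have hPrank : Module.finrank K P = 2 := by
      rw [hP, ← Matrix.range_cons_cons_empty x y ![],
        finrank_span_eq_card (linearIndependent_pair_of_apply_ne_zero hω hxy), Fintype.card_fin]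
    obtain ⟨N, rfl⟩ : ∃ N', N = N' + 2 :=
      Nat.exists_eq_add_of_le' (hN ▸ hPrank ▸ Submodule.finrank_le P)
    have hrank : Module.finrank K (ω.orthogonal P) = N := by
      rw [finrank_orthogonal hnd, hN, hPrank, Nat.add_sub_cancel]
    have hrestrict : (ω.restrict (ω.orthogonal P)).Nondegenerate := by
      refine nondegenerate_restrict_of_disjoint_orthogonal ω hω.isRefl ?_
      rw [orthogonal_orthogonal hnd hω.isRefl]
      exact hdisj.symm
    obtain ⟨u, hu⟩ := ih N (by lia) (ω := ω.restrict _) (fun w => hω w) hrestrict hrank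
    refine ⟨Fin.cons x (Fin.cons y fun k => (u k : V)), ?_⟩
    rw [pfaffian_toMatrixAux_cons_cons fun k => (u k).2 x (Submodule.subset_span (by simp))]
    exact mul_ne_zero hxy hu

theorem nondegenerate_iff_pfaffian_toMatrixAux_ne_zero (hω : ω.IsAlt) {N : ℕ}
    (b : Module.Basis (Fin N) K V) : ω.Nondegenerate ↔ Pfaffian (toMatrixAux b ω) ≠ 0 := by
  have := b.finiteDimensional_of_finite
  simp only [← pfaffianAlternating_apply hω]
  constructor
  · intro hnd
    obtain ⟨v, hv⟩ := exists_pfaffian_toMatrixAux_ne_zero hω hnd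
      (Module.finrank_eq_card_basis b |>.trans (Fintype.card_fin N))
    rw [← pfaffianAlternating_apply hω] at hv
    rw [AlternatingMap.map_basis_ne_zero_iff]
    intro hzero
    simp [hzero] at hv
  · intro hpf
    refine hω.isRefl.nondegenerate_iff_separatingLeft.mpr fun x hx => ?_
    refine b.repr.injective (Finsupp.ext fun a => ?_)
    have hzero : pfaffianAlternating hω N (Function.update b a x) = 0 := by
      rw [pfaffianAlternating_apply]
      refine pfaffian_eq_zero_of_row_col_eq_zero (a := a) (fun c => ?_) (fun c => ?_)
      · simp [hx]
      · simp [hω.eq_iff.mp (hx _)]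
    rw [alternatingMap_update_basis, smul_eq_mul] at hzero
    simpa using (mul_eq_zero.mp hzero).resolve_right hpf

end Field

theorem isAlt_toBilin'_of_mem_matSS {R : Type*} [CommRing R] {N : ℕ}
    {B : Matrix (Fin N) (Fin N) R} (hB : B ∈ MatSS R N) : (Matrix.toBilin' B).IsAlt := by
  intro x
  rw [Matrix.toBilin'_apply, ← Finset.sum_product']
  have hskew (a b : Fin N) : B b a = -B a b := congr_fun (congr_fun hB.1 a) b
  refine Finset.sum_involution (fun p _ => p.swap) ?_ ?_ ?_ ?_
  · rintro ⟨a, b⟩ -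
    rw [Prod.fst_swap, Prod.snd_swap, hskew a b]
    ring
  · rintro ⟨a, b⟩ - hne heq
    obtain rfl : b = a := congr_arg Prod.fst heq
    simp [hB.2 b] at hne
  · simp
  · simp

theorem pfaffian_ne_zero_iff_det_ne_zero {K : Type*} [Field K] {N : ℕ}
    {B : Matrix (Fin N) (Fin N) K} (hB : B ∈ MatSS K N) : Pfaffian B ≠ 0 ↔ B.det ≠ 0 := by
  have hgram : toMatrixAux (Pi.basisFun K (Fin N)) (Matrix.toBilin' B) = B := by
    ext
    simp
  rw [← nondegenerate_toBilin'_iff_det_ne_zero,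
    nondegenerate_iff_pfaffian_toMatrixAux_ne_zero (isAlt_toBilin'_of_mem_matSS hB)
      (Pi.basisFun K (Fin N)), hgram]

end Nondegenerate

section PrincipalMinors

theorem rank_submatrix_le_of_range_subset {R m n p p' q q' : Type*} [CommSemiring R]
    [StrongRankCondition R] [Fintype q] [Fintype q'] (A : Matrix m n R) {f : p → m} {f' : p' → m}
    {g : q → n} {g' : q' → n} (hf : Set.range f ⊆ Set.range f') (hg : Set.range g ⊆ Set.range g') :
    (A.submatrix f g).rank ≤ (A.submatrix f' g').rank := by
  obtain ⟨h, rfl⟩ := Set.range_subset_range_iff_exists_comp.mp hf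
  obtain ⟨k, rfl⟩ := Set.range_subset_range_iff_exists_comp.mp hg
  exact Matrix.rank_submatrix_le (A.submatrix f' g') h k

theorem rank_submatrix_eq_of_range_eq {R m n p p' q q' : Type*} [CommSemiring R]
    [StrongRankCondition R] [Fintype q] [Fintype q'] (A : Matrix m n R) {f : p → m} {f' : p' → m}
    {g : q → n} {g' : q' → n} (hf : Set.range f = Set.range f') (hg : Set.range g = Set.range g') :
    (A.submatrix f g).rank = (A.submatrix f' g').rank :=
  le_antisymm (rank_submatrix_le_of_range_subset A hf.subset hg.subset)
    (rank_submatrix_le_of_range_subset A hf.superset hg.superset)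

variable {K m : Type*} [Field K]

theorem det_submatrix_ne_zero_of_cols_mem_span {ι : Type*} [Fintype ι] [DecidableEq ι]
    {B : Matrix m m K} (hB : B.transpose = -B) {e : ι → m}
    (hind : LinearIndependent K (B.col ∘ e))
    (hspan : ∀ b, B.col b ∈ Submodule.span K (Set.range (B.col ∘ e))) :
    (B.submatrix e e).det ≠ 0 := by
  have hskew (a b : m) : B b a = -B a b := congr_fun (congr_fun hB a) b
  rw [Ne, ← Matrix.exists_mulVec_eq_zero_iff]
  rintro ⟨x, hx, hBx⟩
  let φ : (m → K) →ₗ[K] K := ∑ k, x k • LinearMap.proj (e k)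
  have hφ (b : m) : φ (B.col b) = -∑ k, B b (e k) * x k := by
    simp [φ, hskew b, mul_comm]
  have hker : Submodule.span K (Set.range (B.col ∘ e)) ≤ LinearMap.ker φ := by
    rw [Submodule.span_le]
    rintro _ ⟨l, rfl⟩
    simpa [hφ, Matrix.mulVec_eq_sum, Finset.sum_apply, mul_comm] using congr_fun hBx l
  have hcols : ∑ k, x k • (B.col ∘ e) k = 0 := by
    ext b
    simpa [hφ, mul_comm] using hker (hspan b)
  exact hx (funext (Fintype.linearIndependent_iff.mp hind x hcols))

variable [DecidableEq m] {A : Matrix m m K} {R s t : Finset m}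

theorem card_inter_le_rank_submatrix (hRt : R ⊆ t)
    (hdet : (A.submatrix (Subtype.val : R → m) Subtype.val).det ≠ 0) :
    (R ∩ s).card ≤ (A.submatrix (Subtype.val : t → m) (Subtype.val : s → m)).rank := by
  let toR : ↥(R ∩ s) → R := Set.inclusion Finset.inter_subset_left
  have hcols : LinearIndependent K
      ((A.submatrix (Subtype.val : R → m) (Subtype.val : ↥(R ∩ s) → m)).col) :=
    (Matrix.linearIndependent_cols_of_det_ne_zero hdet).comp toR (Set.inclusion_injective _)
  calc
    (R ∩ s).card = (A.submatrix (Subtype.val : R → m) (Subtype.val : ↥(R ∩ s) → m)).rank := by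
      rw [Matrix.rank_eq_finrank_span_cols, finrank_span_eq_card hcols, Fintype.card_coe]
    _ ≤ _ := rank_submatrix_le_of_range_subset A (by simpa) (by simp [Set.subset_def])

theorem exists_rank_submatrix_le_card_inter (hA : A.transpose = -A) (hst : s ⊆ t) :
    ∃ R ⊆ t, (A.submatrix (Subtype.val : R → m) Subtype.val).det ≠ 0 ∧
      (A.submatrix (Subtype.val : t → m) (Subtype.val : s → m)).rank ≤ (R ∩ s).card := by
  let c : m → t → K := fun b a => A a b
  obtain ⟨J, hJs, -, hsJ, hJ⟩ :=
    exists_linearIndepOn_extension (linearIndepOn_empty K c) (Set.empty_subset (s : Set m))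
  obtain ⟨S, hSt, hJS, htS, hS⟩ :=
    exists_linearIndepOn_extension hJ (hJs.trans (Finset.coe_subset.mpr hst))
  lift S to Finset m using t.finite_toSet.subset hSt
  lift J to Finset m using s.finite_toSet.subset hJs
  norm_cast at hJs hSt hJS
  refine ⟨S, hSt, ?_, ?_⟩
  · let e : S → t := Set.inclusion hSt
    have hA' : (A.submatrix (Subtype.val : t → m) Subtype.val).transpose =
        -A.submatrix (Subtype.val : t → m) Subtype.val := congr_arg (Matrix.submatrix · _ _) hA
    refine det_submatrix_ne_zero_of_cols_mem_span (e := e) hA' hS fun b => ?_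
    have hb := htS ⟨b, b.2, rfl⟩
    rw [Set.image_eq_range] at hb
    exact hb
  · calc
      _ = Module.finrank K (Submodule.span K (c '' s)) := by
        rw [Matrix.rank_eq_finrank_span_cols, Set.image_eq_range]; rfl
      _ ≤ Module.finrank K (Submodule.span K (c '' J)) :=
        Submodule.finrank_mono (Submodule.span_le.mpr hsJ)
      _ = J.card := by
        rw [Set.image_eq_range]
        exact (finrank_span_eq_card hJ).trans (Fintype.card_coe J)
      _ ≤ (S ∩ s).card := Finset.card_le_card (Finset.subset_inter hJS hJs)

end PrincipalMinors

theorem det_submatrix_orderEmbOfFin {R n : Type*} [CommRing R] [LinearOrder n]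
    (A : Matrix n n R) (S : Finset n) :
    (A.submatrix (S.orderEmbOfFin rfl) (S.orderEmbOfFin rfl)).det =
      (A.submatrix (Subtype.val : S → n) Subtype.val).det :=
  Matrix.det_submatrix_equiv_self (S.orderIsoOfFin rfl).toEquiv
    (A.submatrix (Subtype.val : S → n) Subtype.val)

theorem range_castLE_eq_range_val {n k : ℕ} (hk : k ≤ n) : Set.range (Fin.castLE hk) =
    Set.range (Subtype.val : ({a | (a : ℕ) + 1 ≤ k} : Finset (Fin n)) → Fin n) := by
  ext a
  simp

theorem submatrix_mem_matSS {R : Type*} [CommRing R] {n N : ℕ} {A : Matrix (Fin n) (Fin n) R}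
    (hA : A ∈ MatSS R n) (e : Fin N → Fin n) : A.submatrix e e ∈ MatSS R N :=
  ⟨congr_arg (Matrix.submatrix · e e) hA.1, fun _ => hA.2 _⟩

theorem statement4_general {K : Type*} [Field K] {n i j : ℕ} (hji : j ≤ i) (hin : i ≤ n)
    (r : ℕ) {A : Matrix (Fin n) (Fin n) K} (hA : A ∈ MatSS K n) :
    (A.submatrix (Fin.castLE hin) (Fin.castLE (hji.trans hin))).rank ≤ r ↔
      ∀ R : Finset (Fin n), R.Nonempty → Even R.card → (∀ a ∈ R, (a : ℕ) + 1 ≤ i) →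
        r < (R.filter fun a : Fin n => (a : ℕ) + 1 ≤ j).card →
        Pfaffian (A.submatrix (fun s => R.orderEmbOfFin rfl s)
          fun t => R.orderEmbOfFin rfl t) = 0 := by
  have hpf (R : Finset (Fin n)) : Pfaffian (A.submatrix (R.orderEmbOfFin rfl)
      (R.orderEmbOfFin rfl)) ≠ 0 ↔ (A.submatrix (Subtype.val : R → Fin n) Subtype.val).det ≠ 0 := by
    rw [pfaffian_ne_zero_iff_det_ne_zero (submatrix_mem_matSS hA _), det_submatrix_orderEmbOfFin]
  set s : Finset (Fin n) := {a | (a : ℕ) + 1 ≤ j}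
  set t : Finset (Fin n) := {a | (a : ℕ) + 1 ≤ i}
  have hrank : (A.submatrix (Fin.castLE hin) (Fin.castLE (hji.trans hin))).rank =
      (A.submatrix (Subtype.val : t → Fin n) (Subtype.val : s → Fin n)).rank :=
    rank_submatrix_eq_of_range_eq A (range_castLE_eq_range_val _) (range_castLE_eq_range_val _)
  have hinter (R : Finset (Fin n)) : R.filter (fun a : Fin n => (a : ℕ) + 1 ≤ j) = R ∩ s := by
    simp [s, Finset.inter_filter]
  simp only [hrank, hinter]
  constructor
  · intro hrank R _ _ hRi hRj
    contrapose! hRj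
    have hRt : R ⊆ t := fun a ha => by simpa [t] using hRi a ha
    exact (card_inter_le_rank_submatrix hRt ((hpf R).mp hRj)).trans hrank
  · intro hvanish
    have hst : s ⊆ t := Finset.monotone_filter_right _ fun a _ ha => ha.trans hji
    obtain ⟨R, hRt, hdet, hcard⟩ := exists_rank_submatrix_le_card_inter hA.1 hst
    have hpfR := (hpf R).mpr hdet
    refine hcard.trans (le_of_not_gt fun hr => hpfR (hvanish R ?_ ?_ ?_ hr))
    · exact (Finset.card_pos.mp (Nat.zero_lt_of_lt hr)).mono Finset.inter_subset_left
    · exact Nat.not_odd_iff_even.mp fun hodd => hpfR (pfaffian_eq_zero_of_odd hodd _)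
    · exact fun a ha => by simpa [t] using hRt ha

/-- For `A ∈ Mat^ss_n(K)`, `i ≥ j` in `[n]`, and `r ≥ 0`:
`rank A_{[i][j]} ≤ r` iff `pf(A_{RR}) = 0` for every nonempty even-size `R ⊆ [i]`
with `|R ∩ [j]| > r`. -/
theorem statement4 (K : Type*) [Field K] [IsAlgClosed K] (n : ℕ) (hn : 1 ≤ n)
    (i j : ℕ) (hi1 : 1 ≤ i) (hj1 : 1 ≤ j) (hji : j ≤ i) (hin : i ≤ n) (hjn : j ≤ n)
    (r : ℕ) (A : Matrix (Fin n) (Fin n) K) (hA : A ∈ MatSS K n) :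
    (A.submatrix (Fin.castLE hin) (Fin.castLE hjn)).rank ≤ r ↔
      ∀ R : Finset (Fin n), R.Nonempty → Even R.card → (∀ a ∈ R, (a : ℕ) + 1 ≤ i) →
        r < (R.filter fun a : Fin n => (a : ℕ) + 1 ≤ j).card →
        Pfaffian (A.submatrix (fun s => R.orderEmbOfFin rfl s)
          fun t => R.orderEmbOfFin rfl t) = 0 := by
  exact statement4_general hji hin r hA

end Paper
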